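/- arXiv:0902.3216 — 5 statements merged into one kernel-verified Lean document; each statement's English description precedes it below -/
import Mathlib

section
/- Let N ≥ 1 and 2 ≤ p_max < ∞. There exists a constant C > 0, depending only on N and p_max, such that for every exponent p with 2 ≤ p ≤ p_max and all vectors η, ξ ∈ ℝ^N one has |η − ξ|^p ≤ C (|η|^{p−2}η − |ξ|^{p−2}ξ) · (η − ξ), where · denotes the Euclidean inner product (with the convention |q|^{p−2}q = 0 when q = 0). -/
/-!
Fix the norms `x = ‖η‖` and `y = ‖ξ‖` and vary only the angle, that is, `u = ‖η - ξ‖ ^ 2`, which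
ranges over the interval from `(x - y) ^ 2` to `(x + y) ^ 2`. By polarization the inner product is
affine in `u`, whereas `‖η - ξ‖ ^ p = u ^ (p / 2)` is convex in `u`, so it suffices to compare the
two at the endpoints, where `η` and `ξ` are collinear. There the claim reduces to superadditivity
and midpoint convexity of `t ↦ t ^ (p - 1)`. The resulting constant `2 ^ (p - 2)` is optimal, with
equality at `ξ = -η`.
-/

open scoped RealInnerProductSpace

lemma le_of_convexOn_of_concaveOn_of_mem_segment {E : Type*} [AddCommGroup E] [Module ℝ E]
    {s : Set E} {f g : E → ℝ} {x y z : E} (hf : ConvexOn ℝ s f) (hg : ConcaveOn ℝ s g)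
    (hx : x ∈ s) (hy : y ∈ s) (hz : z ∈ segment ℝ x y) (hfgx : f x ≤ g x) (hfgy : f y ≤ g y) :
    f z ≤ g z := by
  have hmax : (f - g) z ≤ max ((f - g) x) ((f - g) y) := (hf.sub hg).le_on_segment hx hy hz
  exact sub_nonpos.1 (hmax.trans (max_le (sub_nonpos.2 hfgx) (sub_nonpos.2 hfgy)))

lemma concaveOn_mul_add_const {s : Set ℝ} (hs : Convex ℝ s) (m k : ℝ) :
    ConcaveOn ℝ s fun u => m * u + k :=
  ((LinearMap.mulLeft ℝ m).concaveOn hs).add_const k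

section Real

variable {x y p : ℝ}

lemma sq_rpow_half (x p : ℝ) : (x ^ 2) ^ (p / 2) = |x| ^ p := by
  rw [← sq_abs, ← Real.rpow_natCast_mul (abs_nonneg x)]
  congr 1
  push_cast
  ring

lemma rpow_sub_one_eq_rpow_sub_two_mul (hx : 0 ≤ x) (hp : p ≠ 1) :
    x ^ (p - 1) = x ^ (p - 2) * x := by
  rw [← Real.rpow_add_one' hx (fun h => hp (by linarith))]
  ring_nf

lemma abs_sub_rpow_le_mul_sub (hx : 0 ≤ x) (hy : 0 ≤ y) (hp : 2 ≤ p) :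
    |x - y| ^ p ≤ (x ^ (p - 1) - y ^ (p - 1)) * (x - y) := by
  wlog hyx : y ≤ x generalizing x y
  · rw [abs_sub_comm]
    linarith [this hy hx (le_of_not_ge hyx)]
  have hxy : 0 ≤ x - y := sub_nonneg.2 hyx
  have superadditive : (x - y) ^ (p - 1) ≤ x ^ (p - 1) - y ^ (p - 1) := by
    rw [le_sub_iff_add_le]
    simpa only [sub_add_cancel] using
      Real.add_rpow_le_rpow_add hxy hy (show 1 ≤ p - 1 by linarith)
  calc |x - y| ^ p = (x - y) ^ (p - 1) * (x - y) := by
        rw [abs_of_nonneg hxy, ← Real.rpow_add_one' hxy (by linarith), sub_add_cancel]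
    _ ≤ (x ^ (p - 1) - y ^ (p - 1)) * (x - y) := by gcongr

lemma add_rpow_le_mul_add (hx : 0 ≤ x) (hy : 0 ≤ y) (hp : 2 ≤ p) :
    (x + y) ^ p ≤ 2 ^ (p - 2) * ((x ^ (p - 1) + y ^ (p - 1)) * (x + y)) := by
  have midpoint_convex : (x + y) ^ (p - 1) ≤ 2 ^ (p - 2) * (x ^ (p - 1) + y ^ (p - 1)) := by
    lift x to NNReal using hx
    lift y to NNReal using hy
    rw [show p - 2 = p - 1 - 1 by ring]
    exact_mod_cast NNReal.rpow_add_le_mul_rpow_add_rpow x y (show 1 ≤ p - 1 by linarith)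
  calc (x + y) ^ p = (x + y) ^ (p - 1) * (x + y) := by
        rw [← Real.rpow_add_one' (by positivity) (by linarith), sub_add_cancel]
    _ ≤ 2 ^ (p - 2) * (x ^ (p - 1) + y ^ (p - 1)) * (x + y) := by gcongr
    _ = 2 ^ (p - 2) * ((x ^ (p - 1) + y ^ (p - 1)) * (x + y)) := mul_assoc ..

lemma rpow_half_le_of_mem_segment {u : ℝ} (hx : 0 ≤ x) (hy : 0 ≤ y) (hp : 2 ≤ p)
    (hu : u ∈ segment ℝ ((x - y) ^ 2) ((x + y) ^ 2)) :
    u ^ (p / 2) ≤ 2 ^ (p - 2) * ((x ^ (p - 2) + y ^ (p - 2)) / 2 * u +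
      (x ^ (p - 2) - y ^ (p - 2)) * (x ^ 2 - y ^ 2) / 2) := by
  have hp1 : p ≠ 1 := by linarith
  have hconvex : ConvexOn ℝ (Set.Ici 0) fun u : ℝ => u ^ (p / 2) := convexOn_rpow (by linarith)
  have hconcave := (concaveOn_mul_add_const (convex_Ici 0) ((x ^ (p - 2) + y ^ (p - 2)) / 2)
    ((x ^ (p - 2) - y ^ (p - 2)) * (x ^ 2 - y ^ 2) / 2)).smul
      (show (0 : ℝ) ≤ 2 ^ (p - 2) by positivity)
  refine le_of_convexOn_of_concaveOn_of_mem_segment hconvex hconcave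
    (Set.mem_Ici.2 (sq_nonneg _)) (Set.mem_Ici.2 (sq_nonneg _)) hu ?parallel ?antiparallel
  case parallel =>
    have hsub := abs_sub_rpow_le_mul_sub hx hy hp
    calc ((x - y) ^ 2) ^ (p / 2) = |x - y| ^ p := sq_rpow_half _ _
      _ ≤ (x ^ (p - 1) - y ^ (p - 1)) * (x - y) := hsub
      _ ≤ 2 ^ (p - 2) * ((x ^ (p - 1) - y ^ (p - 1)) * (x - y)) :=
        le_mul_of_one_le_left (le_trans (by positivity) hsub)
          (Real.one_le_rpow one_le_two (by linarith))
      _ = _ := by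
        rw [rpow_sub_one_eq_rpow_sub_two_mul hx hp1, rpow_sub_one_eq_rpow_sub_two_mul hy hp1,
          smul_eq_mul]
        ring
  case antiparallel =>
    calc ((x + y) ^ 2) ^ (p / 2) = (x + y) ^ p := by
          rw [sq_rpow_half, abs_of_nonneg (add_nonneg hx hy)]
      _ ≤ 2 ^ (p - 2) * ((x ^ (p - 1) + y ^ (p - 1)) * (x + y)) := add_rpow_le_mul_add hx hy hp
      _ = _ := by
        rw [rpow_sub_one_eq_rpow_sub_two_mul hx hp1, rpow_sub_one_eq_rpow_sub_two_mul hy hp1,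
          smul_eq_mul]
        ring

end Real

lemma norm_sub_sq_mem_segment {E : Type*} [SeminormedAddCommGroup E] (η ξ : E) :
    ‖η - ξ‖ ^ 2 ∈ segment ℝ ((‖η‖ - ‖ξ‖) ^ 2) ((‖η‖ + ‖ξ‖) ^ 2) := by
  have hlower : (‖η‖ - ‖ξ‖) ^ 2 ≤ ‖η - ξ‖ ^ 2 :=
    sq_le_sq.2 (by simpa only [abs_norm] using abs_norm_sub_norm_le η ξ)
  have hupper : ‖η - ξ‖ ^ 2 ≤ (‖η‖ + ‖ξ‖) ^ 2 := by
    gcongr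
    exact norm_sub_le η ξ
  rw [segment_eq_Icc (hlower.trans hupper)]
  exact ⟨hlower, hupper⟩

section InnerProductSpace

variable {E : Type*} [SeminormedAddCommGroup E] [InnerProductSpace ℝ E]

lemma inner_smul_sub_smul_sub (a b : ℝ) (η ξ : E) :
    ⟪a • η - b • ξ, η - ξ⟫ =
      (a + b) / 2 * ‖η - ξ‖ ^ 2 + (a - b) * (‖η‖ ^ 2 - ‖ξ‖ ^ 2) / 2 := by
  rw [norm_sub_sq_real]
  simp only [inner_sub_left, inner_sub_right, real_inner_smul_left,
    real_inner_self_eq_norm_sq, real_inner_comm η ξ]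
  ring

lemma norm_sub_rpow_le_inner {p : ℝ} (hp : 2 ≤ p) (η ξ : E) :
    ‖η - ξ‖ ^ p ≤ 2 ^ (p - 2) * ⟪‖η‖ ^ (p - 2) • η - ‖ξ‖ ^ (p - 2) • ξ, η - ξ⟫ := by
  rw [inner_smul_sub_smul_sub]
  simpa only [sq_rpow_half, abs_norm] using rpow_half_le_of_mem_segment
    (norm_nonneg η) (norm_nonneg ξ) hp (norm_sub_sq_mem_segment η ξ)

lemma inner_rpow_smul_sub_nonneg {p : ℝ} (hp : 2 ≤ p) (η ξ : E) :
    0 ≤ ⟪‖η‖ ^ (p - 2) • η - ‖ξ‖ ^ (p - 2) • ξ, η - ξ⟫ :=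
  nonneg_of_mul_nonneg_right (le_trans (by positivity) (norm_sub_rpow_le_inner hp η ξ))
    (show (0 : ℝ) < 2 ^ (p - 2) by positivity)

theorem stmt_0_general {p pmax : ℝ} (hp : 2 ≤ p) (hpmax : p ≤ pmax) (η ξ : E) :
    ‖η - ξ‖ ^ p ≤ 2 ^ (pmax - 2) * ⟪‖η‖ ^ (p - 2) • η - ‖ξ‖ ^ (p - 2) • ξ, η - ξ⟫ :=
  calc ‖η - ξ‖ ^ p ≤ 2 ^ (p - 2) * ⟪‖η‖ ^ (p - 2) • η - ‖ξ‖ ^ (p - 2) • ξ, η - ξ⟫ :=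
        norm_sub_rpow_le_inner hp η ξ
    _ ≤ 2 ^ (pmax - 2) * ⟪‖η‖ ^ (p - 2) • η - ‖ξ‖ ^ (p - 2) • ξ, η - ξ⟫ := by
        gcongr
        · exact inner_rpow_smul_sub_nonneg hp η ξ
        · exact one_le_two

end InnerProductSpace

/-- For `N ≥ 1` and `2 ≤ p_max < ∞` there is a constant `C > 0`,
depending only on `N` and `p_max`, such that for every exponent `p` with `2 ≤ p ≤ p_max`
and all `η, ξ ∈ ℝ^N`,
`|η − ξ|^p ≤ C (|η|^{p−2}η − |ξ|^{p−2}ξ) · (η − ξ)`. -/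
theorem stmt_0 (N : ℕ) (hN : 1 ≤ N) (pmax : ℝ) (hpmax : 2 ≤ pmax) :
    ∃ C : ℝ, 0 < C ∧ ∀ p : ℝ, 2 ≤ p → p ≤ pmax →
      ∀ η ξ : EuclideanSpace ℝ (Fin N),
        ‖η - ξ‖ ^ p ≤ C * ⟪(‖η‖ ^ (p - 2)) • η - (‖ξ‖ ^ (p - 2)) • ξ, η - ξ⟫ :=
  ⟨2 ^ (pmax - 2), by positivity, fun _ hp hpm η ξ => stmt_0_general hp hpm η ξ⟩
end

section
/- Let Ω ⊂ ℝ^N be open, u ∈ C²(Ω), and let p : Ω → ℝ be differentiable at a point x ∈ Ω with ∇u(x) ≠ 0. Then the vector field V(z) = |∇u(z)|^{p(z)−2} ∇u(z) is differentiable at x and its divergence at x equals |∇u(x)|^{p(x)−2} { Δu(x) + ((p(x)−2)/|∇u(x)|²) ⟨D²u(x) ∇u(x), ∇u(x)⟩ + log|∇u(x)| ⟨∇p(x), ∇u(x)⟩ }; that is, the p(x)-Laplacian of u at x admits this non-divergence form expression. -/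
open scoped RealInnerProductSpace

/-!
For a scalar field `φ` and a vector field `G`, `D(φG)(x) h = φ(x) DG(x) h + (Dφ(x) h) G(x)`, and the
rank-one map `h ↦ (Dφ(x) h) G(x)` has trace `Dφ(x) G(x)`; hence `div (φG) = φ div G + Dφ(G)`.
For `φ = |G| ^ q` with `G(x) ≠ 0`, logarithmic differentiation gives
`Dφ = φ (q |G|⁻² ⟨DG ·, G⟩ + log |G| Dq)`. Take `G = ∇u` and `q = p - 2`.
-/

section Divergence

/-- The divergence of a vector field `V` at `x`, encoded as the trace of the derivative of `V`, so
that it depends on no basis. It is `0` where `V` is not differentiable, and everywhere if `E` is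
infinite-dimensional. -/
noncomputable def divergence (𝕜 : Type*) {E : Type*} [NontriviallyNormedField 𝕜]
    [NormedAddCommGroup E] [NormedSpace 𝕜 E] (V : E → E) (x : E) : 𝕜 :=
  LinearMap.trace 𝕜 E (fderiv 𝕜 V x)

variable {𝕜 E : Type*}

theorem divergence_smul [NontriviallyNormedField 𝕜] [NormedAddCommGroup E] [NormedSpace 𝕜 E]
    [FiniteDimensional 𝕜 E] {φ : E → 𝕜} {V : E → E} {x : E}
    (hφ : DifferentiableAt 𝕜 φ x) (hV : DifferentiableAt 𝕜 V x) :
    divergence 𝕜 (fun z => φ z • V z) x = φ x * divergence 𝕜 V x + fderiv 𝕜 φ x (V x) := by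
  have htrace : LinearMap.trace 𝕜 E ((fderiv 𝕜 φ x).smulRight (V x)) = fderiv 𝕜 φ x (V x) :=
    LinearMap.trace_smulRight (fderiv 𝕜 φ x : E →ₗ[𝕜] 𝕜) (V x)
  rw [divergence, fderiv_fun_smul hφ hV, ContinuousLinearMap.toLinearMap_add,
    ContinuousLinearMap.toLinearMap_smul, map_add, map_smul, htrace, smul_eq_mul, divergence]

theorem divergence_eq_sum_inner [RCLike 𝕜] [NormedAddCommGroup E] [InnerProductSpace 𝕜 E]
    {ι : Type*} [Fintype ι] (b : OrthonormalBasis ι 𝕜 E) (V : E → E) (x : E) :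
    divergence 𝕜 V x = ∑ i, inner 𝕜 (b i) (fderiv 𝕜 V x (b i)) :=
  LinearMap.trace_eq_sum_inner _ b

end Divergence

section NormRpow

variable {E F : Type*} [NormedAddCommGroup E] [NormedSpace ℝ E]
  [NormedAddCommGroup F] [InnerProductSpace ℝ F]
  {G : E → F} {G' : E →L[ℝ] F} {q : E → ℝ} {q' : E →L[ℝ] ℝ} {x : E}

theorem hasFDerivAt_norm_comp (hG : HasFDerivAt G G' x) (hx : G x ≠ 0) :
    HasFDerivAt (fun z => ‖G z‖) (‖G x‖⁻¹ • (innerSL ℝ (G x)).comp G') x := by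
  have hsqrt := hG.norm_sq.sqrt (by positivity)
  simp only [Real.sqrt_sq (norm_nonneg _)] at hsqrt
  convert hsqrt using 1
  module

theorem hasFDerivAt_norm_rpow_comp (hG : HasFDerivAt G G' x) (hq : HasFDerivAt q q' x)
    (hx : G x ≠ 0) :
    HasFDerivAt (fun z => ‖G z‖ ^ q z)
      (‖G x‖ ^ q x • ((q x / ‖G x‖ ^ 2) • (innerSL ℝ (G x)).comp G' + Real.log ‖G x‖ • q')) x := by
  have hnorm : 0 < ‖G x‖ := norm_pos_iff.mpr hx
  convert (hasFDerivAt_norm_comp hG hx).rpow hq hnorm using 1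
  simp only [Real.rpow_sub_one hnorm.ne', smul_add, smul_smul]
  congr 2
  field_simp

end NormRpow

theorem contDiffAt_gradient {E : Type*} [NormedAddCommGroup E] [InnerProductSpace ℝ E]
    [CompleteSpace E] {u : E → ℝ} {x : E} {m n : WithTop ℕ∞} (hu : ContDiffAt ℝ n u x)
    (hmn : m + 1 ≤ n) : ContDiffAt ℝ m (gradient u) x :=
  (InnerProductSpace.toDual ℝ E).symm.contDiff.contDiffAt.comp x (hu.fderiv_right hmn)

theorem stmt_6_general {E : Type*} [NormedAddCommGroup E] [InnerProductSpace ℝ E]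
    [FiniteDimensional ℝ E] {G : E → E} {p : E → ℝ} {x : E}
    (hG : DifferentiableAt ℝ G x) (hp : DifferentiableAt ℝ p x) (hx : G x ≠ 0) :
    DifferentiableAt ℝ (fun z => ‖G z‖ ^ (p z - 2) • G z) x ∧
      divergence ℝ (fun z => ‖G z‖ ^ (p z - 2) • G z) x =
        ‖G x‖ ^ (p x - 2) *
          (divergence ℝ G x + (p x - 2) / ‖G x‖ ^ 2 * ⟪fderiv ℝ G x (G x), G x⟫
            + Real.log ‖G x‖ * fderiv ℝ p x (G x)) := by
  have hφ := hasFDerivAt_norm_rpow_comp hG.hasFDerivAt (hp.hasFDerivAt.sub_const 2) hx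
  refine ⟨hφ.differentiableAt.smul hG, ?_⟩
  rw [divergence_smul hφ.differentiableAt hG, hφ.fderiv, real_inner_comm]
  simp only [add_apply, smul_apply, ContinuousLinearMap.comp_apply, innerSL_apply_apply,
    smul_eq_mul]
  ring

/-- Let `Ω ⊂ ℝ^N` be open, `u ∈ C²(Ω)`, `p` differentiable at `x ∈ Ω` and
`∇u(x) ≠ 0`. Then the vector field `V(z) = |∇u(z)|^{p(z)−2}∇u(z)` is differentiable at `x`
and its divergence at `x` (the `p(x)`-Laplacian) equals
`|∇u(x)|^{p(x)−2} { Δu(x) + ((p(x)−2)/|∇u(x)|²) ⟨D²u(x)∇u(x), ∇u(x)⟩ + log|∇u(x)| ⟨∇p(x), ∇u(x)⟩ }`. -/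
theorem stmt_6 (N : ℕ) (Ω : Set (EuclideanSpace ℝ (Fin N))) (hΩ : IsOpen Ω)
    (u p : EuclideanSpace ℝ (Fin N) → ℝ) (hu : ContDiffOn ℝ 2 u Ω)
    (x : EuclideanSpace ℝ (Fin N)) (hx : x ∈ Ω)
    (hp : DifferentiableAt ℝ p x) (hg : gradient u x ≠ 0) :
    DifferentiableAt ℝ
        (fun z => (‖gradient u z‖ ^ (p z - 2)) • gradient u z) x ∧
      (∑ i : Fin N,
          ⟪fderiv ℝ (fun z => (‖gradient u z‖ ^ (p z - 2)) • gradient u z) x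
              (EuclideanSpace.single i (1 : ℝ)), EuclideanSpace.single i (1 : ℝ)⟫) =
        ‖gradient u x‖ ^ (p x - 2) *
          ( (∑ i : Fin N, ⟪fderiv ℝ (gradient u) x (EuclideanSpace.single i (1 : ℝ)),
                EuclideanSpace.single i (1 : ℝ)⟫)
            + ((p x - 2) / ‖gradient u x‖ ^ 2) *
                ⟪fderiv ℝ (gradient u) x (gradient u x), gradient u x⟫
            + Real.log ‖gradient u x‖ * ⟪gradient p x, gradient u x⟫ ) := by
  have hG : DifferentiableAt ℝ (gradient u) x :=
    (contDiffAt_gradient (hu.contDiffAt (hΩ.mem_nhds hx)) one_add_one_eq_two.le).differentiableAt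
      one_ne_zero
  simpa only [divergence_eq_sum_inner (EuclideanSpace.basisFun (Fin N) ℝ),
    EuclideanSpace.basisFun_apply, real_inner_comm, inner_gradient_left]
    using stmt_6_general hG hp hg
end

section
/- Let Ω ⊂ ℝ^N be open and let u : Ω → [0, ∞) be continuous, Lipschitz with constant C_Lip, and non-degenerate with constants c > 0 and r₀ > 0, meaning sup_{B_r(x)} u ≥ c·r for every x ∈ Ω ∩ ∂{u > 0} and every 0 < r ≤ r₀ with B_r(x) ⊂ Ω. Then there exists a constant c̃ ∈ (0,1), depending only on N, C_Lip and c, such that for every ball B_r(x₀) ⊂ Ω centered at a free boundary point x₀ ∈ ∂{u > 0} with r ≤ r₀, the Lebesgue measure satisfies |B_r(x₀) ∩ {u > 0}| ≥ c̃ |B_r(x₀)|. -/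
open MeasureTheory Metric

/-!
Every point `x` with `K * δ < u x` is the center of a ball of radius `δ` on which the `K`-Lipschitz
function `u` is positive. Non-degeneracy on the half ball `B_{r/2}(x₀)` provides such a point `y`
with `δ = κ r`, where `κ ≤ 1/2` and `K κ < c / 2`; then `B_{κ r}(y) ⊆ B_r(x₀) ∩ {u > 0}`,
and the two balls have volume ratio `κ ^ N`.
-/

section PseudoMetricSpace

variable {X : Type*} [PseudoMetricSpace X] {K : NNReal} {s : Set X} {u : X → ℝ} {x : X} {ρ δ : ℝ}

theorem inter_ball_subset_pos_of_lipschitzOnWith (hu : LipschitzOnWith K u s) (hx : x ∈ s)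
    (hδ : K * δ < u x) : s ∩ ball x δ ⊆ {y ∈ s | 0 < u y} := by
  rintro y ⟨hy, hyx⟩
  have hux : u x ≤ u y + K * δ :=
    calc u x ≤ u y + K * dist x y := hu.le_add_mul hx hy
      _ ≤ u y + K * δ := by gcongr; exact (mem_ball'.1 hyx).le
  exact ⟨hy, by linarith⟩

theorem exists_ball_subset_pos_of_lt_sSup (hu : LipschitzOnWith K u s) (hρ : 0 < ρ)
    (hs : ball x (ρ + δ) ⊆ s) (hδ : K * δ < sSup (u '' ball x ρ)) :
    ∃ y, ball y δ ⊆ ball x (ρ + δ) ∩ {z ∈ s | 0 < u z} := by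
  obtain ⟨_, ⟨y, hyx, rfl⟩, huy⟩ :=
    exists_lt_of_lt_csSup ((nonempty_ball.2 hρ).image u) hδ
  refine ⟨y, fun z hzy => ?_⟩
  have hδ_pos : 0 < δ := pos_of_mem_ball hzy
  have hys : y ∈ s := hs (ball_subset_ball (by linarith) hyx)
  have hzx : z ∈ ball x (ρ + δ) :=
    ball_subset_ball' (by linarith [mem_ball.1 hyx]) hzy
  exact ⟨hzx, inter_ball_subset_pos_of_lipschitzOnWith hu hys huy ⟨hs hzx, hzy⟩⟩

end PseudoMetricSpace

section AddHaar

variable {E : Type*} [NormedAddCommGroup E] [NormedSpace ℝ E] [FiniteDimensional ℝ E]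
  [MeasurableSpace E] [BorelSpace E] (μ : Measure E) [μ.IsAddHaarMeasure]
  {s : Set E} {u : E → ℝ} {x : E} {r : ℝ} {K : NNReal}

theorem ofReal_pow_mul_measure_ball_le_of_ball_subset {κ : ℝ} (hκ : 0 < κ) (x : E) {y : E}
    (hs : ball y (κ * r) ⊆ s) :
    ENNReal.ofReal (κ ^ Module.finrank ℝ E) * μ (ball x r) ≤ μ s :=
  calc ENNReal.ofReal (κ ^ Module.finrank ℝ E) * μ (ball x r)
      = μ (ball y (κ * r)) := by
        rw [Measure.addHaar_ball_mul_of_pos μ y hκ r, Measure.addHaar_ball_center μ x r]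
    _ ≤ μ s := measure_mono hs

theorem ofReal_pow_mul_measure_ball_le_of_lt_sSup {θ κ : ℝ} (hθ : 0 < θ) (hκ : 0 < κ)
    (hθκ : θ + κ ≤ 1) (hu : LipschitzOnWith K u s) (hr : 0 < r) (hs : ball x r ⊆ s)
    (hsup : K * (κ * r) < sSup (u '' ball x (θ * r))) :
    ENNReal.ofReal (κ ^ Module.finrank ℝ E) * μ (ball x r) ≤
      μ (ball x r ∩ {y ∈ s | 0 < u y}) := by
  have hball : ball x (θ * r + κ * r) ⊆ ball x r := by
    rw [← add_mul]
    exact ball_subset_ball (mul_le_of_le_one_left hr.le hθκ)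
  obtain ⟨y, hy⟩ :=
    exists_ball_subset_pos_of_lt_sSup hu (mul_pos hθ hr) (hball.trans hs) hsup
  exact ofReal_pow_mul_measure_ball_le_of_ball_subset μ hκ x
    (hy.trans (Set.inter_subset_inter_left _ hball))

end AddHaar

theorem stmt_9_general (N : ℕ) (K : NNReal) {c : ℝ} (hc : 0 < c) :
    ∃ ctil : ℝ, 0 < ctil ∧ ctil < 1 ∧
      ∀ {E : Type*} [NormedAddCommGroup E] [NormedSpace ℝ E] [FiniteDimensional ℝ E]
        [MeasurableSpace E] [BorelSpace E] (μ : Measure E) [μ.IsAddHaarMeasure],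
        Module.finrank ℝ E = N →
      ∀ {s : Set E} {u : E → ℝ}, LipschitzOnWith K u s →
      ∀ {x : E} {r : ℝ}, 0 < r → ball x r ⊆ s → c * (r / 2) ≤ sSup (u '' ball x (r / 2)) →
        ENNReal.ofReal ctil * μ (ball x r) ≤ μ (ball x r ∩ {y ∈ s | 0 < u y}) := by
  obtain ⟨κ, hκ, hκ_half, hKκ⟩ : ∃ κ : ℝ, 0 < κ ∧ κ ≤ 1 / 2 ∧ K * κ < c / 2 := by
    obtain ⟨δ, hδ, hKδ⟩ := exists_pos_mul_lt (half_pos hc) (K : ℝ)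
    refine ⟨min δ (1 / 2), by positivity, min_le_right _ _, lt_of_le_of_lt ?_ hKδ⟩
    gcongr
    exact min_le_left _ _
  have hκ_one : κ < 1 := by linarith
  -- The exponent `N + 1` instead of `N` keeps the constant strictly below `1` when `N = 0`.
  refine ⟨κ ^ (N + 1), by positivity, pow_lt_one₀ hκ.le hκ_one N.succ_ne_zero, ?_⟩
  rintro E _ _ _ _ _ μ _ rfl s u hu x r hr hs hnd
  have hsup : K * (κ * r) < sSup (u '' ball x (1 / 2 * r)) := by
    rw [one_div_mul_eq_div]
    calc K * (κ * r) = K * κ * r := (mul_assoc _ _ _).symm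
      _ < c / 2 * r := by gcongr
      _ = c * (r / 2) := by ring
      _ ≤ sSup (u '' ball x (r / 2)) := hnd
  calc ENNReal.ofReal (κ ^ (Module.finrank ℝ E + 1)) * μ (ball x r)
      ≤ ENNReal.ofReal (κ ^ Module.finrank ℝ E) * μ (ball x r) := by
        gcongr ENNReal.ofReal ?_ * _
        exact pow_le_pow_of_le_one hκ.le hκ_one.le (Nat.le_succ _)
    _ ≤ μ (ball x r ∩ {y ∈ s | 0 < u y}) :=
        ofReal_pow_mul_measure_ball_le_of_lt_sSup μ one_half_pos hκ (by linarith) hu hr hs hsup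

/-- Let `Ω ⊂ ℝ^N` be open and `u : Ω → [0,∞)` continuous, Lipschitz with
constant `C_Lip`, and non-degenerate with constants `c > 0`, `r₀ > 0` (i.e.
`sup_{B_r(x)} u ≥ c·r` for every free boundary point `x` and `0 < r ≤ r₀` with
`B_r(x) ⊂ Ω`). Then there is `c̃ ∈ (0,1)`, depending only on `N`, `C_Lip` and `c`, such
that for every ball `B_r(x₀) ⊂ Ω` centered at a free boundary point with `r ≤ r₀`,
`|B_r(x₀) ∩ {u > 0}| ≥ c̃ |B_r(x₀)|`. -/
theorem stmt_9 (N : ℕ) (CLip : NNReal) (c : ℝ) (hc : 0 < c) :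
    ∃ ctil : ℝ, 0 < ctil ∧ ctil < 1 ∧
      ∀ (Ω : Set (EuclideanSpace ℝ (Fin N))), IsOpen Ω →
      ∀ u : EuclideanSpace ℝ (Fin N) → ℝ,
        ContinuousOn u Ω → (∀ x ∈ Ω, 0 ≤ u x) → LipschitzOnWith CLip u Ω →
        ∀ r₀ : ℝ, 0 < r₀ →
        (∀ x ∈ Ω ∩ frontier {y ∈ Ω | 0 < u y}, ∀ r : ℝ, 0 < r → r ≤ r₀ →
          ball x r ⊆ Ω → c * r ≤ sSup (u '' ball x r)) →
        ∀ x₀ ∈ Ω ∩ frontier {y ∈ Ω | 0 < u y}, ∀ r : ℝ, 0 < r → r ≤ r₀ →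
          ball x₀ r ⊆ Ω →
          ENNReal.ofReal ctil * volume (ball x₀ r) ≤
            volume (ball x₀ r ∩ {y ∈ Ω | 0 < u y}) := by
  obtain ⟨ctil, hpos, hlt, hdensity⟩ := stmt_9_general N CLip hc
  exact ⟨ctil, hpos, hlt, fun Ω _ u _ _ hLip r₀ _ hnd x₀ hx₀ r hr hrr₀ hball =>
    hdensity volume finrank_euclideanSpace_fin hLip hr hball <|
      hnd x₀ hx₀ (r / 2) (half_pos hr) ((half_le_self hr.le).trans hrr₀) <|
        (ball_subset_ball (half_le_self hr.le)).trans hball⟩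
end

section
/- Let 1 < p₀ < ∞, λ₀ > 0, λ₁ > 0, let ν₀ ∈ ℝ^N be a unit vector and R > 0, and let u : B_R ⊂ ℝ^N → ℝ be given by u(x) = λ₁ ⟨x, ν₀⟩⁻ = λ₁ max(−⟨x, ν₀⟩, 0). Suppose u is a local minimizer in B_R of the functional J₀(v) = ∫_{B_R} |∇v|^{p₀}/p₀ + λ₀ χ_{{v>0}} dx among Lipschitz compact perturbations, i.e. J₀(u) ≤ J₀(v) for every locally Lipschitz v : B_R → ℝ coinciding with u outside a compact subset of B_R. Then λ₁ = ( (p₀/(p₀−1)) λ₀ )^{1/p₀}. -/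
open scoped RealInnerProductSpace
open MeasureTheory Metric

/-- `v` is locally Lipschitz on `Ω`. -/
def LocLipOn {N : ℕ} (Ω : Set (EuclideanSpace ℝ (Fin N)))
    (v : EuclideanSpace ℝ (Fin N) → ℝ) : Prop :=
  ∀ x ∈ Ω, ∃ (K : NNReal) (t : Set (EuclideanSpace ℝ (Fin N))),
    t ∈ nhds x ∧ LipschitzOnWith K v t

open Filter Set
open scoped Topology NNReal

/-!
For a test function `φ` compare `u = λ₁ ⟨x, ν⟩⁻` with the competitors
`v_ε = λ₁ (⟨x, ν⟩ + ε φ(x))⁻ = u(x + ε φ(x) ν)`. The shear `x ↦ x + ε φ(x) ν` has the Jacobian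
`1 + ε ∂_ν φ`, and pulling `J(u)` back by it gives
`J(v_ε) - J(u) = ∫_{⟨x, ν⟩ + ε φ < 0} e(ε ∇φ)`, where `e(0) = 0` and
`e'(0) = (λ₁^p (1 - 1/p) - λ₀) ⟨ν, ·⟩`. As the integrand is `O(ε)`, the motion of the region does
not contribute to first order, so that minimality forces
`(λ₁^p (1 - 1/p) - λ₀) ∫_{⟨x, ν⟩ < 0} ∂_ν φ = 0`. For a radially decreasing bump `φ` centred on the
hyperplane `⟨x, ν⟩ = 0` the last integral is positive.
-/

section Gradient

variable {E : Type*} [NormedAddCommGroup E] [InnerProductSpace ℝ E] {φ : E → ℝ} {x : E} {K : ℝ≥0}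

lemma hasFDerivAt_inner_left (ν x : E) : HasFDerivAt (fun y => ⟪y, ν⟫) (innerSL ℝ ν) x := by
  simp_rw [real_inner_comm ν]
  exact (innerSL ℝ ν).hasFDerivAt

lemma lipschitzWith_mul_negPart_inner_add (hφ : LipschitzWith K φ) (lam₁ : ℝ) (ν : E) :
    ∃ C, LipschitzWith C fun x => lam₁ * max (-(⟪x, ν⟫ + φ x)) 0 := by
  have hinner : LipschitzWith ‖innerSL ℝ ν‖₊ fun x : E => ⟪x, ν⟫ := by
    simpa [real_inner_comm ν] using (innerSL ℝ ν).lipschitz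
  exact ⟨_, (lipschitzWith_smul lam₁).comp ((hinner.add hφ).neg.max_const 0)⟩

variable [CompleteSpace E]

lemma gradient_inner_left (ν x : E) : gradient (fun y => ⟪y, ν⟫) x = ν :=
  HasGradientAt.gradient (hasGradientAt_iff_hasFDerivAt.2 (hasFDerivAt_inner_left ν x))

lemma gradient_inner_add (hφ : DifferentiableAt ℝ φ x) (ν : E) :
    gradient (fun y => ⟪y, ν⟫ + φ y) x = ν + gradient φ x := by
  have hinner := hasFDerivAt_inner_left ν x
  rw [gradient, fderiv_fun_add hinner.differentiableAt hφ, map_add, ← gradient, ← gradient,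
    gradient_inner_left]

lemma gradient_const_mul (hφ : DifferentiableAt ℝ φ x) (c : ℝ) :
    gradient (fun y => c * φ y) x = c • gradient φ x := by
  simp [gradient, fderiv_const_mul hφ]

lemma continuous_gradient (hφ : ContDiff ℝ 1 φ) : Continuous (gradient φ) :=
  (InnerProductSpace.toDual ℝ E).symm.continuous.comp (hφ.continuous_fderiv one_ne_zero)

lemma norm_gradient_le_of_lipschitzWith (hφ : LipschitzWith K φ) (x : E) :
    ‖gradient φ x‖ ≤ K := by
  rw [gradient, LinearIsometryEquiv.norm_map]
  exact norm_fderiv_le_of_lipschitz ℝ hφ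

end Gradient

section Energy

variable {E : Type*} [NormedAddCommGroup E] [InnerProductSpace ℝ E] [CompleteSpace E]
  {f : E → ℝ} {x : E} {p lam₀ lam₁ : ℝ}

/-- The one-phase energy `∫_Ω |∇v|^p / p + λ χ_{v > 0} dμ`, with the gradient of Mathlib, which is
`0` at points where `v` is not differentiable. -/
noncomputable def onePhaseEnergy [MeasurableSpace E] (μ : Measure E) (p lam : ℝ) (Ω : Set E)
    (v : E → ℝ) : ℝ :=
  ∫ x in Ω, (‖gradient v x‖ ^ p / p + if 0 < v x then lam else 0) ∂μ

/-- `u` minimizes the one-phase energy in `Ω` among the Lipschitz functions that coincide with `u`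
outside a compact subset of `Ω`. -/
def IsLipschitzLocalMinimizer [MeasurableSpace E] (μ : Measure E) (p lam : ℝ) (Ω : Set E)
    (u : E → ℝ) : Prop :=
  ∀ v : E → ℝ, (∃ C, LipschitzWith C v) →
    (∃ K, IsCompact K ∧ K ⊆ Ω ∧ ∀ x ∉ K, v x = u x) →
    onePhaseEnergy μ p lam Ω u ≤ onePhaseEnergy μ p lam Ω v

lemma norm_gradient_mul_negPart_of_neg (hf : DifferentiableAt ℝ f x) (hx : f x < 0)
    (hlam₁ : 0 ≤ lam₁) :
    ‖gradient (fun y => lam₁ * max (-f y) 0) x‖ = lam₁ * ‖gradient f x‖ := by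
  have hev : (fun y => lam₁ * max (-f y) 0) =ᶠ[𝓝 x] fun y => -lam₁ * f y := by
    filter_upwards [hf.continuousAt.eventually_lt continuousAt_const hx] with y hy
    rw [max_eq_left (by linarith)]
    ring
  rw [hev.gradient_eq, gradient, gradient, fderiv_const_mul hf, LinearIsometryEquiv.norm_map,
    LinearIsometryEquiv.norm_map, norm_smul, norm_neg, Real.norm_of_nonneg hlam₁]

/- At such a point the function attains its minimum `0`, so that its derivative, or the junk value
of its derivative, vanishes. -/
lemma gradient_mul_negPart_of_nonneg (hx : 0 ≤ f x) (hlam₁ : 0 ≤ lam₁) :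
    gradient (fun y => lam₁ * max (-f y) 0) x = 0 := by
  have hmin : IsLocalMin (fun y => lam₁ * max (-f y) 0) x := by
    refine Eventually.of_forall fun y => ?_
    simp only [max_eq_right (neg_nonpos.2 hx), mul_zero]
    positivity
  rw [gradient, hmin.fderiv_eq_zero, map_zero]

lemma onePhaseDensity_mul_negPart (hf : DifferentiableAt ℝ f x) (hp : 0 < p) (hlam₁ : 0 < lam₁) :
    (‖gradient (fun y => lam₁ * max (-f y) 0) x‖ ^ p / p
        + if 0 < lam₁ * max (-f x) 0 then lam₀ else 0) =
      if f x < 0 then lam₁ ^ p / p * ‖gradient f x‖ ^ p + lam₀ else 0 := by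
  have hpos : 0 < lam₁ * max (-f x) 0 ↔ f x < 0 := by simp [hlam₁]
  simp only [hpos]
  split_ifs with hx
  · rw [norm_gradient_mul_negPart_of_neg hf hx hlam₁.le,
      Real.mul_rpow hlam₁.le (norm_nonneg _)]
    ring
  · rw [gradient_mul_negPart_of_nonneg (not_lt.1 hx) hlam₁.le, norm_zero, Real.zero_rpow hp.ne']
    ring

lemma onePhaseEnergy_mul_negPart [MeasurableSpace E] {μ : Measure E} {Ω : Set E}
    (hf : Differentiable ℝ f) (hp : 0 < p) (hlam₁ : 0 < lam₁) :
    onePhaseEnergy μ p lam₀ Ω (fun x => lam₁ * max (-f x) 0) =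
      ∫ x in Ω, (if f x < 0 then lam₁ ^ p / p * ‖gradient f x‖ ^ p + lam₀ else 0) ∂μ := by
  simp only [onePhaseEnergy, onePhaseDensity_mul_negPart (hf _) hp hlam₁]

end Energy

section Shear

lemma bijective_add_of_lipschitzWith {E : Type*} [NormedAddCommGroup E] [NormedSpace ℝ E]
    [CompleteSpace E] {h : E → E} {K : ℝ≥0} (hh : LipschitzWith K h) (hK : K < 1) :
    Function.Bijective fun x => x + h x := by
  have happrox : ApproximatesLinearOn (fun x => x + h x)
      (ContinuousLinearEquiv.refl ℝ E : E →L[ℝ] E) univ K := by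
    refine ApproximatesLinearOn.approximatesLinearOn_iff_lipschitzOnWith.2 ?_
    simpa [Pi.sub_def] using hh
  have hnorm : Subsingleton E ∨
      K < ‖((ContinuousLinearEquiv.refl ℝ E).symm : E →L[ℝ] E)‖₊⁻¹ := by
    refine (subsingleton_or_nontrivial E).imp_right fun (_ : Nontrivial E) => ?_
    have hid : ‖((ContinuousLinearEquiv.refl ℝ E).symm : E →L[ℝ] E)‖₊ = 1 :=
      NNReal.eq ContinuousLinearMap.norm_id
    rwa [hid, inv_one]
  exact ⟨injOn_univ.1 (happrox.injOn hnorm), happrox.surjective hnorm⟩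

lemma image_eq_of_eqOn_compl_id {α : Type*} {g : α → α} {s : Set α} (hg : Function.Bijective g)
    (hs : EqOn g id sᶜ) : g '' s = s := by
  rw [← compl_inj_iff, ← image_compl_eq hg, hs.image_eq, image_id]

variable {E : Type*} [NormedAddCommGroup E] [NormedSpace ℝ E] {φ : E → ℝ} {ν x : E} {K : ℝ≥0}

/-- The map `x ↦ x + φ(x) ν` that displaces points in the fixed direction `ν`. -/
def shear (φ : E → ℝ) (ν x : E) : E := x + φ x • ν

lemma hasFDerivAt_shear {φ' : E →L[ℝ] ℝ} (hφ : HasFDerivAt φ φ' x) (ν : E) :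
    HasFDerivAt (shear φ ν) (ContinuousLinearMap.id ℝ E + φ'.smulRight ν) x :=
  (hasFDerivAt_id x).add (hφ.smul_const ν)

lemma det_id_add_smulRight [FiniteDimensional ℝ E] (ℓ : E →L[ℝ] ℝ) (ν : E) :
    (ContinuousLinearMap.id ℝ E + ℓ.smulRight ν).det = 1 + ℓ ν :=
  LinearMap.transvection.det (ℓ : E →ₗ[ℝ] ℝ) ν

lemma bijective_shear [CompleteSpace E] (hφ : LipschitzWith K φ) (hK : K * ‖ν‖₊ < 1) :
    Function.Bijective (shear φ ν) := by
  refine bijective_add_of_lipschitzWith (LipschitzWith.of_dist_le_mul fun x y => ?_) hK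
  rw [dist_eq_norm, ← sub_smul, norm_smul, NNReal.coe_mul, coe_nnnorm, mul_right_comm]
  gcongr
  exact hφ.dist_le_mul x y

/- Outside `Ω` the shear is the identity, so that it maps `Ω` onto itself; its Jacobian is that of
a transvection. -/
lemma setIntegral_comp_shear [FiniteDimensional ℝ E] [MeasurableSpace E] [BorelSpace E]
    (μ : Measure E) [μ.IsAddHaarMeasure] {Ω : Set E} (hΩ : MeasurableSet Ω)
    (hφ : Differentiable ℝ φ) (hφK : LipschitzWith K φ) (hK : K * ‖ν‖₊ < 1)
    (hφΩ : ∀ x ∉ Ω, φ x = 0) (f : E → ℝ) :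
    ∫ x in Ω, f x ∂μ = ∫ x in Ω, (1 + fderiv ℝ φ x ν) * f (shear φ ν x) ∂μ := by
  have hbij := bijective_shear hφK hK
  have himage : shear φ ν '' Ω = Ω :=
    image_eq_of_eqOn_compl_id hbij fun x hx => by simp [shear, hφΩ x hx]
  have hjac : ∀ x, 0 < 1 + fderiv ℝ φ x ν := fun x => by
    have hle : ‖fderiv ℝ φ x ν‖ ≤ K * ‖ν‖ :=
      (fderiv ℝ φ x).le_of_opNorm_le (norm_fderiv_le_of_lipschitz ℝ hφK) ν
    have hlt : ‖fderiv ℝ φ x ν‖ < 1 := hle.trans_lt (mod_cast hK)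
    linarith [(abs_lt.1 hlt).1]
  conv_lhs => rw [← himage]
  rw [integral_image_eq_integral_abs_det_fderiv_smul μ hΩ
    (fun x _ => (hasFDerivAt_shear (hφ x).hasFDerivAt ν).hasFDerivWithinAt) hbij.injective.injOn]
  simp only [det_id_add_smulRight, abs_of_pos (hjac _), smul_eq_mul]

end Shear

section MovingRegion

lemma integrableOn_ite_neg {X : Type*} [MetricSpace X] [ProperSpace X] [MeasurableSpace X]
    [OpensMeasurableSpace X] {μ : Measure X} [IsFiniteMeasureOnCompacts μ] {Ω : Set X}
    (hΩ : Bornology.IsBounded Ω) {f g : X → ℝ} (hf : Continuous f) (hg : Continuous g) :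
    IntegrableOn (fun x => if f x < 0 then g x else 0) Ω μ := by
  have hgΩ : IntegrableOn g Ω μ :=
    (hg.continuousOn.integrableOn_compact hΩ.isCompact_closure).mono_set subset_closure
  exact hgΩ.indicator (isOpen_lt hf continuous_const).measurableSet

lemma hasDerivAt_ite_add_mul_neg {a b g' : ℝ} {g : ℝ → ℝ} (ha : a ≠ 0)
    (hg : HasDerivAt g g' 0) :
    HasDerivAt (fun ε => if a + ε * b < 0 then g ε else 0) (if a < 0 then g' else 0) 0 := by
  have hcont : ContinuousAt (fun ε : ℝ => a + ε * b) 0 := by fun_prop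
  rcases ha.lt_or_gt with ha | ha
  · rw [if_pos ha]
    refine hg.congr_of_eventuallyEq ?_
    filter_upwards [hcont.eventually_lt continuousAt_const (by simpa using ha)] with ε hε
    exact if_pos hε
  · rw [if_neg ha.not_gt]
    refine (hasDerivAt_const 0 (0 : ℝ)).congr_of_eventuallyEq ?_
    filter_upwards [continuousAt_const.eventually_lt hcont (by simpa using ha)] with ε hε
    exact if_neg hε.not_gt

lemma stronglyMeasurable_ite_add_mul_neg {α F : Type*} [MeasurableSpace α]
    [NormedAddCommGroup F] [NormedSpace ℝ F] {f φ : α → ℝ} {w : α → F} {e : F → ℝ}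
    (hf : Measurable f) (hφ : Measurable φ) (hw : StronglyMeasurable w) (he : Continuous e)
    (ε : ℝ) : StronglyMeasurable fun x => if f x + ε * φ x < 0 then e (ε • w x) else 0 :=
  StronglyMeasurable.ite (measurableSet_lt (by fun_prop) measurable_const)
    (he.comp_stronglyMeasurable (hw.const_smul ε)) stronglyMeasurable_const

/- Where `f ≠ 0` the sign of `f + ε φ` is locally constant in `ε`, and `e (ε w) = O(ε)` dominates
the difference quotients, so that the motion of the region of integration has no first-order
effect. -/
lemma hasDerivAt_integral_ite_add_mul_neg {α F : Type*} [MeasurableSpace α] {μ : Measure α}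
    [IsFiniteMeasure μ] [NormedAddCommGroup F] [NormedSpace ℝ F] {f φ : α → ℝ} {w : α → F}
    {e : F → ℝ} {e' : F →L[ℝ] ℝ} {M : ℝ} (hf : Measurable f) (hφ : Measurable φ)
    (hw : StronglyMeasurable w) (hwM : ∀ x, ‖w x‖ ≤ M) (hf0 : ∀ᵐ x ∂μ, f x ≠ 0)
    (he : Continuous e) (he0 : e 0 = 0) (hee' : HasFDerivAt e e' 0) :
    HasDerivAt (fun ε : ℝ => ∫ x, (if f x + ε * φ x < 0 then e (ε • w x) else 0) ∂μ)
      (∫ x, (if f x < 0 then e' (w x) else 0) ∂μ) 0 := by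
  obtain ⟨C, hC0, hC⟩ := hee'.isBigO_sub.exists_nonneg
  obtain ⟨r, hr, he_le⟩ := Metric.eventually_nhds_iff_ball.1 hC.bound
  simp only [he0, sub_zero, mem_ball_zero_iff] at he_le
  have hε_small : ∀ᶠ ε : ℝ in 𝓝[≠] 0, |ε| * M < r :=
    (ContinuousAt.eventually_lt (f := fun ε : ℝ => |ε| * M) (by fun_prop) continuousAt_const
      (by simpa using hr)).filter_mono nhdsWithin_le_nhds
  rw [hasDerivAt_iff_tendsto_slope_zero]
  simp only [zero_add, zero_smul, he0, ite_self, integral_zero, sub_zero, ← integral_smul]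
  refine tendsto_integral_filter_of_dominated_convergence (fun _ => C * M)
    (Eventually.of_forall fun ε => ((stronglyMeasurable_ite_add_mul_neg hf hφ hw he
      ε).const_smul ε⁻¹).aestronglyMeasurable) ?_ (integrable_const _) ?_
  · filter_upwards [hε_small, self_mem_nhdsWithin] with ε hε hε0
    refine Eventually.of_forall fun x => ?_
    have hwx : ‖ε • w x‖ ≤ |ε| * M := by
      rw [norm_smul, Real.norm_eq_abs]
      exact mul_le_mul_of_nonneg_left (hwM x) (abs_nonneg ε)
    have hle : ‖if f x + ε * φ x < 0 then e (ε • w x) else 0‖ ≤ C * (|ε| * M) := by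
      split_ifs
      · exact (he_le _ (hwx.trans_lt hε)).trans (mul_le_mul_of_nonneg_left hwx hC0)
      · rw [norm_zero]
        exact mul_nonneg hC0 ((norm_nonneg _).trans hwx)
    rw [norm_smul, norm_inv, Real.norm_eq_abs, inv_mul_le_iff₀ (abs_pos.2 hε0)]
    exact hle.trans_eq (by ring)
  · filter_upwards [hf0] with x hx
    have hray : HasDerivAt (fun ε : ℝ => e (ε • w x)) (e' (w x)) 0 := by
      have hline : HasDerivAt (fun ε : ℝ => ε • w x) (w x) 0 := by
        simpa using (hasDerivAt_id (0 : ℝ)).smul_const (w x)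
      exact HasFDerivAt.comp_hasDerivAt 0 (by simpa using hee') hline
    simpa [he0] using
      (hasDerivAt_ite_add_mul_neg (b := φ x) hx hray).tendsto_slope_zero

end MovingRegion

section Excess

variable {E : Type*} [NormedAddCommGroup E] [InnerProductSpace ℝ E] {p lam₀ lam₁ : ℝ} {ν : E}

/-- The energy density `λ₁^p |ν + z|^p / p + λ₀` of a profile with slope `λ₁ (ν + z)`, minus the
density `λ₁^p / p + λ₀` of the unperturbed profile times the Jacobian `1 + ⟨ν, z⟩` of the
corresponding shear. -/
noncomputable def energyExcess (p lam₀ lam₁ : ℝ) (ν z : E) : ℝ :=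
  (lam₁ ^ p / p * ‖ν + z‖ ^ p + lam₀) - (1 + ⟪ν, z⟫) * (lam₁ ^ p / p + lam₀)

lemma energyExcess_zero (hν : ‖ν‖ = 1) : energyExcess p lam₀ lam₁ ν 0 = 0 := by
  simp [energyExcess, hν]

lemma continuous_energyExcess (hp : 0 ≤ p) : Continuous (energyExcess p lam₀ lam₁ ν) := by
  unfold energyExcess
  fun_prop (disch := exact fun _ => Or.inr hp)

lemma hasFDerivAt_norm_add_rpow (hν : ‖ν‖ = 1) (p : ℝ) :
    HasFDerivAt (fun z : E => ‖ν + z‖ ^ p) (p • innerSL ℝ ν) 0 := by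
  have hsq : HasFDerivAt (fun z : E => ‖ν + z‖ ^ 2) ((2 : ℝ) • innerSL ℝ ν) 0 := by
    simpa [ofNat_smul_eq_nsmul] using ((hasFDerivAt_id (𝕜 := ℝ) (0 : E)).const_add ν).norm_sq
  have heq : ∀ z : E, (‖ν + z‖ ^ 2) ^ (p / 2) = ‖ν + z‖ ^ p := fun z => by
    rw [← Real.rpow_natCast_mul (norm_nonneg _), Nat.cast_two, mul_div_cancel₀ p two_ne_zero]
  simpa [heq, hν, smul_smul] using hsq.rpow_const (p := p / 2) (by simp [hν])

lemma hasFDerivAt_energyExcess_zero (hν : ‖ν‖ = 1) (hp : p ≠ 0) :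
    HasFDerivAt (energyExcess p lam₀ lam₁ ν)
      ((lam₁ ^ p * (1 - 1 / p) - lam₀) • innerSL ℝ ν) 0 := by
  have h := (((hasFDerivAt_norm_add_rpow hν p).const_mul (lam₁ ^ p / p)).add_const lam₀).sub
    (((innerSL ℝ ν).hasFDerivAt.const_add 1).mul_const (lam₁ ^ p / p + lam₀))
  refine h.congr_fderiv ?_
  ext z
  simp only [sub_apply, smul_apply, innerSL_apply_apply, smul_eq_mul]
  field_simp
  ring

end Excess

section FirstVariation

variable {E : Type*} [NormedAddCommGroup E] [InnerProductSpace ℝ E] [FiniteDimensional ℝ E]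
  [MeasurableSpace E] [BorelSpace E] {μ : Measure E} {p lam₀ lam₁ : ℝ} {Ω : Set E} {φ : E → ℝ}
  {ν : E} {K : ℝ≥0}

lemma ae_inner_ne_zero [μ.IsAddHaarMeasure] (hν : ν ≠ 0) : ∀ᵐ x ∂μ, ⟪x, ν⟫ ≠ 0 := by
  have hker : LinearMap.ker (innerSL ℝ ν : E →ₗ[ℝ] ℝ) ≠ ⊤ := fun h => by
    have hmem : ν ∈ LinearMap.ker (innerSL ℝ ν : E →ₗ[ℝ] ℝ) := h ▸ Submodule.mem_top
    exact hν (by simpa using hmem)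
  filter_upwards [measure_eq_zero_iff_ae_notMem.1 (Measure.addHaar_submodule μ _ hker)] with x hx
  simpa [real_inner_comm ν] using hx

/- The change of variables `x ↦ x + φ(x) ν` turns the half space `{⟪x, ν⟫ < 0}` into the positivity
set of the perturbed profile. -/
lemma onePhaseEnergy_inner_eq_setIntegral [μ.IsAddHaarMeasure] (hΩ : MeasurableSet Ω)
    (hφ : Differentiable ℝ φ) (hφK : LipschitzWith K φ) (hK : K < 1) (hφΩ : ∀ x ∉ Ω, φ x = 0)
    (hν : ‖ν‖ = 1) (hp : 0 < p) (hlam₁ : 0 < lam₁) :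
    onePhaseEnergy μ p lam₀ Ω (fun x => lam₁ * max (-⟪x, ν⟫) 0) =
      ∫ x in Ω, (if ⟪x, ν⟫ + φ x < 0 then
        (1 + ⟪ν, gradient φ x⟫) * (lam₁ ^ p / p + lam₀) else 0) ∂μ := by
  have hshear : ∀ x, ⟪shear φ ν x, ν⟫ = ⟪x, ν⟫ + φ x := fun x => by
    simp [shear, inner_add_left, inner_smul_left, hν]
  have hKν : K * ‖ν‖₊ < 1 := by rwa [show ‖ν‖₊ = 1 from NNReal.eq hν, mul_one]
  rw [onePhaseEnergy_mul_negPart (fun x => (hasFDerivAt_inner_left ν x).differentiableAt) hp hlam₁,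
    setIntegral_comp_shear μ hΩ hφ hφK hKν hφΩ]
  simp only [gradient_inner_left, hshear, hν, Real.one_rpow, mul_one, mul_ite, mul_zero,
    inner_gradient_right, conj_trivial]

lemma onePhaseEnergy_inner_add_sub [μ.IsAddHaarMeasure] (hΩ : MeasurableSet Ω)
    (hΩb : Bornology.IsBounded Ω) (hφ : ContDiff ℝ 1 φ) (hφK : LipschitzWith K φ) (hK : K < 1)
    (hφΩ : ∀ x ∉ Ω, φ x = 0) (hν : ‖ν‖ = 1) (hp : 0 < p) (hlam₁ : 0 < lam₁) :
    onePhaseEnergy μ p lam₀ Ω (fun x => lam₁ * max (-(⟪x, ν⟫ + φ x)) 0) -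
        onePhaseEnergy μ p lam₀ Ω (fun x => lam₁ * max (-⟪x, ν⟫) 0) =
      ∫ x in Ω, (if ⟪x, ν⟫ + φ x < 0 then
        energyExcess p lam₀ lam₁ ν (gradient φ x) else 0) ∂μ := by
  have hφd : Differentiable ℝ φ := hφ.differentiable one_ne_zero
  have hgrad := continuous_gradient hφ
  have hprofile : Continuous fun x : E => ⟪x, ν⟫ + φ x := by fun_prop
  have hprofile_diff : Differentiable ℝ fun x : E => ⟪x, ν⟫ + φ x := fun x =>
    (hasFDerivAt_inner_left ν x).differentiableAt.add (hφd x)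
  have hdensity : Continuous fun x => lam₁ ^ p / p * ‖ν + gradient φ x‖ ^ p + lam₀ :=
    ((hgrad.const_add ν).norm.rpow_const fun _ => Or.inr hp.le).const_mul _ |>.add_const _
  simp only [← gradient_inner_add (hφd _)] at hdensity
  rw [onePhaseEnergy_inner_eq_setIntegral hΩ hφd hφK hK hφΩ hν hp hlam₁,
    onePhaseEnergy_mul_negPart hprofile_diff hp hlam₁, ← integral_sub
      (integrableOn_ite_neg hΩb hprofile hdensity)
      (integrableOn_ite_neg hΩb hprofile (by fun_prop))]
  refine integral_congr_ae (Eventually.of_forall fun x => ?_)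
  simp only [gradient_inner_add (hφd x), energyExcess]
  split_ifs <;> ring

lemma hasDerivAt_onePhaseEnergy_inner_add [μ.IsAddHaarMeasure] (hΩ : MeasurableSet Ω)
    (hΩb : Bornology.IsBounded Ω) (hφ : ContDiff ℝ 1 φ) (hφK : LipschitzWith K φ)
    (hφΩ : ∀ x ∉ Ω, φ x = 0) (hν : ‖ν‖ = 1) (hp : 0 < p) (hlam₁ : 0 < lam₁) :
    HasDerivAt
      (fun ε : ℝ => onePhaseEnergy μ p lam₀ Ω (fun x => lam₁ * max (-(⟪x, ν⟫ + ε * φ x)) 0))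
      ((lam₁ ^ p * (1 - 1 / p) - lam₀) *
        ∫ x in Ω, (if ⟪x, ν⟫ < 0 then fderiv ℝ φ x ν else 0) ∂μ) 0 := by
  have hfinite : IsFiniteMeasure (μ.restrict Ω) :=
    isFiniteMeasure_restrict.2 hΩb.measure_lt_top.ne
  have hderiv := hasDerivAt_integral_ite_add_mul_neg (μ := μ.restrict Ω) (f := fun x => ⟪x, ν⟫)
    (by fun_prop) hφ.continuous.measurable (continuous_gradient hφ).stronglyMeasurable
    (norm_gradient_le_of_lipschitzWith hφK)
    (ae_restrict_of_ae (ae_inner_ne_zero (norm_ne_zero_iff.1 (by simp [hν]))))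
    (continuous_energyExcess hp.le) (energyExcess_zero hν)
    (hasFDerivAt_energyExcess_zero (lam₀ := lam₀) (lam₁ := lam₁) hν hp.ne')
  have hsmall : ∀ᶠ ε : ℝ in 𝓝 0, ‖ε‖₊ * K < 1 :=
    ContinuousAt.eventually_lt (f := fun ε : ℝ => ‖ε‖₊ * K) (by fun_prop) continuousAt_const
      (by simp)
  refine ((hderiv.const_add
    (onePhaseEnergy μ p lam₀ Ω fun x => lam₁ * max (-⟪x, ν⟫) 0)).congr_of_eventuallyEq
      ?_).congr_deriv ?_
  · filter_upwards [hsmall] with ε hε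
    have hsub := onePhaseEnergy_inner_add_sub (μ := μ) (lam₀ := lam₀) hΩ hΩb
      (contDiff_const.mul hφ : ContDiff ℝ 1 fun x => ε * φ x)
      ((lipschitzWith_smul ε).comp hφK) hε (fun x hx => by simp [hφΩ x hx]) hν hp hlam₁
    simp only [gradient_const_mul (hφ.differentiable one_ne_zero _)] at hsub
    linarith
  · rw [← integral_const_mul]
    simp [inner_gradient_right]

lemma IsLipschitzLocalMinimizer.first_variation_eq_zero [μ.IsAddHaarMeasure]
    (hmin : IsLipschitzLocalMinimizer μ p lam₀ Ω fun x => lam₁ * max (-⟪x, ν⟫) 0)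
    (hΩ : MeasurableSet Ω) (hΩb : Bornology.IsBounded Ω) (hφ : ContDiff ℝ 1 φ)
    (hφΩ : tsupport φ ⊆ Ω) (hν : ‖ν‖ = 1) (hp : 0 < p) (hlam₁ : 0 < lam₁) :
    (lam₁ ^ p * (1 - 1 / p) - lam₀) *
      ∫ x in Ω, (if ⟪x, ν⟫ < 0 then fderiv ℝ φ x ν else 0) ∂μ = 0 := by
  have hcompact : HasCompactSupport φ :=
    isCompact_of_isClosed_isBounded (isClosed_tsupport φ) (hΩb.subset hφΩ)
  obtain ⟨K, hφK⟩ := hφ.lipschitzWith_of_hasCompactSupport hcompact one_ne_zero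
  refine IsLocalMin.hasDerivAt_eq_zero (Eventually.of_forall fun ε => ?_)
    (hasDerivAt_onePhaseEnergy_inner_add hΩ hΩb hφ hφK
      (fun x hx => image_eq_zero_of_notMem_tsupport fun hxφ => hx (hφΩ hxφ)) hν hp hlam₁)
  simp only [zero_mul, add_zero]
  refine hmin _ (lipschitzWith_mul_negPart_inner_add ((lipschitzWith_smul ε).comp hφK) lam₁ ν)
    ⟨tsupport φ, hcompact, hφΩ, fun x hx => ?_⟩
  simp [image_eq_zero_of_notMem_tsupport hx]

end FirstVariation

section Bump

lemma hasDerivAt_posPart_sq (s : ℝ) :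
    HasDerivAt (fun y : ℝ => max y 0 ^ 2) (2 * max s 0) s := by
  have hquadratic (y : ℝ) :
      |max y 0 ^ 2 - max s 0 ^ 2 - (y - s) * (2 * max s 0)| ≤ (y - s) ^ 2 := by
    rw [abs_le]
    rcases max_cases y 0 with ⟨hy, _⟩ | ⟨hy, _⟩ <;>
      rcases max_cases s 0 with ⟨hs, _⟩ | ⟨hs, _⟩ <;>
      rw [hy, hs] <;> constructor <;> nlinarith
  rw [hasDerivAt_iff_isLittleO]
  refine Asymptotics.IsBigO.trans_isLittleO (g := fun y => ‖y - s‖ ^ 2)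
    (Asymptotics.IsBigO.of_bound 1 (Eventually.of_forall fun y => ?_))
    (Asymptotics.isLittleO_pow_sub_sub s one_lt_two)
  simpa only [smul_eq_mul, Real.norm_eq_abs, sq_abs, one_mul, abs_sq] using hquadratic y

lemma contDiff_posPart_sq : ContDiff ℝ 1 fun y : ℝ => max y 0 ^ 2 := by
  rw [contDiff_one_iff_deriv, funext fun s => (hasDerivAt_posPart_sq s).deriv]
  exact ⟨fun s => (hasDerivAt_posPart_sq s).differentiableAt, by fun_prop⟩

variable {E : Type*} [NormedAddCommGroup E] {x₀ ν : E} {ρ : ℝ}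

/-- The `C¹` bump function `x ↦ ((ρ² - |x - x₀|²)₊)²`, supported in the closed ball of radius `ρ`
about `x₀` and radially decreasing. -/
noncomputable def quarticBump (x₀ : E) (ρ : ℝ) (x : E) : ℝ :=
  max (ρ ^ 2 - ‖x - x₀‖ ^ 2) 0 ^ 2

lemma tsupport_quarticBump_subset (x₀ : E) (hρ : 0 ≤ ρ) :
    tsupport (quarticBump x₀ ρ) ⊆ closedBall x₀ ρ := by
  refine closure_minimal (fun x hx => ?_) isClosed_closedBall
  rw [mem_closedBall, dist_eq_norm]
  contrapose! hx
  have hle : ρ ^ 2 - ‖x - x₀‖ ^ 2 ≤ 0 := sub_nonpos.2 (pow_le_pow_left₀ hρ hx.le 2)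
  simp [quarticBump, max_eq_right hle]

variable [InnerProductSpace ℝ E]

lemma contDiff_quarticBump (x₀ : E) (ρ : ℝ) : ContDiff ℝ 1 (quarticBump x₀ ρ) :=
  contDiff_posPart_sq.comp (contDiff_const.sub ((contDiff_id.sub contDiff_const).norm_sq ℝ))

lemma fderiv_quarticBump (x₀ : E) (ρ : ℝ) (x ν : E) :
    fderiv ℝ (quarticBump x₀ ρ) x ν =
      4 * max (ρ ^ 2 - ‖x - x₀‖ ^ 2) 0 * -⟪x - x₀, ν⟫ := by
  have hsq := (((hasFDerivAt_id (𝕜 := ℝ) x).sub_const x₀).norm_sq).const_sub (ρ ^ 2)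
  have h := (hasDerivAt_posPart_sq _).comp_hasFDerivAt x hsq
  rw [show fderiv ℝ (quarticBump x₀ ρ) x = _ from h.fderiv]
  simp only [id_eq, ContinuousLinearMap.comp_id, smul_apply, neg_apply,
    innerSL_apply_apply, smul_eq_mul, nsmul_eq_mul, Nat.cast_ofNat]
  ring

lemma setIntegral_fderiv_quarticBump_pos [FiniteDimensional ℝ E] [MeasurableSpace E]
    [BorelSpace E] {μ : Measure E} [μ.IsAddHaarMeasure] {Ω : Set E} (hΩb : Bornology.IsBounded Ω)
    (hρ : 0 < ρ) (hρΩ : ball x₀ ρ ⊆ Ω) (hx₀ : ⟪x₀, ν⟫ = 0) (hν : ν ≠ 0) :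
    0 < ∫ x in Ω, (if ⟪x, ν⟫ < 0 then fderiv ℝ (quarticBump x₀ ρ) x ν else 0) ∂μ := by
  have hinner : ∀ x, ⟪x - x₀, ν⟫ = ⟪x, ν⟫ := fun x => by rw [inner_sub_left, hx₀, sub_zero]
  have hcont : Continuous fun x => fderiv ℝ (quarticBump x₀ ρ) x ν :=
    ((contDiff_quarticBump x₀ ρ).continuous_fderiv one_ne_zero).clm_apply continuous_const
  rw [setIntegral_pos_iff_support_of_nonneg_ae (Eventually.of_forall fun x => ?_)
    (integrableOn_ite_neg hΩb (by fun_prop) hcont)]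
  · have hopen : IsOpen (ball x₀ ρ ∩ {x | ⟪x, ν⟫ < 0}) :=
      isOpen_ball.inter (isOpen_lt (by fun_prop) continuous_const)
    have hnonempty : (ball x₀ ρ ∩ {x | ⟪x, ν⟫ < 0}).Nonempty := by
      refine ⟨x₀ - (ρ / (2 * ‖ν‖)) • ν, ?_, ?_⟩
      · rw [mem_ball, dist_eq_norm, sub_sub_cancel_left, norm_neg, norm_smul,
          Real.norm_of_nonneg (by positivity)]
        field_simp
        linarith
      · simp only [mem_ofPred_eq, inner_sub_left, hx₀, inner_smul_left, conj_trivial, zero_sub,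
          real_inner_self_eq_norm_sq]
        exact neg_neg_of_pos (by positivity)
    refine (hopen.measure_pos μ hnonempty).trans_le (measure_mono fun x hx => ⟨?_, hρΩ hx.1⟩)
    have hxρ : 0 < ρ ^ 2 - ‖x - x₀‖ ^ 2 :=
      sub_pos.2 (pow_lt_pow_left₀ (mem_ball_iff_norm.1 hx.1) (norm_nonneg _) two_ne_zero)
    have hxν : ⟪x, ν⟫ < 0 := hx.2
    rw [Function.mem_support, if_pos hxν, fderiv_quarticBump, hinner, max_eq_left hxρ.le]
    exact (mul_pos (mul_pos four_pos hxρ) (neg_pos.2 hxν)).ne'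
  · rw [Pi.zero_apply]
    split_ifs with hxν
    · rw [fderiv_quarticBump, hinner]
      exact mul_nonneg (by positivity) (neg_nonneg.2 hxν.le)
    · exact le_rfl

end Bump

section FreeBoundaryCondition

variable {E : Type*} [NormedAddCommGroup E] [InnerProductSpace ℝ E] [FiniteDimensional ℝ E]
  [MeasurableSpace E] [BorelSpace E] {μ : Measure E} [μ.IsAddHaarMeasure] {p lam₀ lam₁ : ℝ}
  {Ω : Set E} {x₀ ν : E}

theorem IsLipschitzLocalMinimizer.free_boundary_condition
    (hmin : IsLipschitzLocalMinimizer μ p lam₀ Ω fun x => lam₁ * max (-⟪x, ν⟫) 0)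
    (hΩ : IsOpen Ω) (hΩb : Bornology.IsBounded Ω) (hx₀Ω : x₀ ∈ Ω) (hx₀ : ⟪x₀, ν⟫ = 0)
    (hν : ‖ν‖ = 1) (hp : 0 < p) (hlam₁ : 0 < lam₁) :
    lam₁ ^ p * (1 - 1 / p) = lam₀ := by
  obtain ⟨ρ, hρ, hρΩ⟩ := nhds_basis_closedBall.mem_iff.1 (hΩ.mem_nhds hx₀Ω)
  have hvariation := hmin.first_variation_eq_zero hΩ.measurableSet hΩb (contDiff_quarticBump x₀ ρ)
    ((tsupport_quarticBump_subset x₀ hρ.le).trans hρΩ) hν hp hlam₁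
  have hpos := setIntegral_fderiv_quarticBump_pos (μ := μ) hΩb hρ
    (ball_subset_closedBall.trans hρΩ) hx₀ (norm_ne_zero_iff.1 (hν ▸ one_ne_zero))
  exact sub_eq_zero.1 ((mul_eq_zero.1 hvariation).resolve_right hpos.ne')

theorem stmt_13_general
    (hmin : IsLipschitzLocalMinimizer μ p lam₀ Ω fun x => lam₁ * max (-⟪x, ν⟫) 0)
    (hΩ : IsOpen Ω) (hΩb : Bornology.IsBounded Ω) (hx₀Ω : x₀ ∈ Ω) (hx₀ : ⟪x₀, ν⟫ = 0)
    (hν : ‖ν‖ = 1) (hp : 0 < p) (hp1 : p ≠ 1) (hlam₁ : 0 < lam₁) :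
    lam₁ = (p / (p - 1) * lam₀) ^ (1 / p) := by
  have hbalance := hmin.free_boundary_condition hΩ hΩb hx₀Ω hx₀ hν hp hlam₁
  have hp1' : p - 1 ≠ 0 := sub_ne_zero.2 hp1
  have hpow : p / (p - 1) * lam₀ = lam₁ ^ p := by
    rw [← hbalance]
    field_simp
  rw [hpow, one_div, Real.rpow_rpow_inv hlam₁.le hp.ne']

end FreeBoundaryCondition

/-- Let `1 < p₀ < ∞`, `λ₀ > 0`, `λ₁ > 0`, `ν₀` a unit vector, `R > 0`,
and `u(x) = λ₁ ⟨x, ν₀⟩⁻`. If `u` is a local minimizer in `B_R` of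
`J₀(v) = ∫_{B_R} |∇v|^{p₀}/p₀ + λ₀ χ_{v>0}` among Lipschitz compact perturbations, then
`λ₁ = ((p₀/(p₀−1)) λ₀)^{1/p₀}`. -/
theorem stmt_13 (N : ℕ) (hN : 1 ≤ N) (p₀ lam₀ lam₁ R : ℝ)
    (hp₀ : 1 < p₀) (hlam₀ : 0 < lam₀) (hlam₁ : 0 < lam₁) (hR : 0 < R)
    (ν₀ : EuclideanSpace ℝ (Fin N)) (hν₀ : ‖ν₀‖ = 1)
    (hmin : ∀ v : EuclideanSpace ℝ (Fin N) → ℝ,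
      LocLipOn (ball (0 : EuclideanSpace ℝ (Fin N)) R) v →
      (∃ K : Set (EuclideanSpace ℝ (Fin N)), IsCompact K ∧
        K ⊆ ball (0 : EuclideanSpace ℝ (Fin N)) R ∧
        ∀ x ∉ K, v x = lam₁ * max (-⟪x, ν₀⟫) 0) →
      (∫ x in ball (0 : EuclideanSpace ℝ (Fin N)) R,
          ‖gradient (fun y : EuclideanSpace ℝ (Fin N) =>
              lam₁ * max (-⟪y, ν₀⟫) 0) x‖ ^ p₀ / p₀
            + (if 0 < lam₁ * max (-⟪x, ν₀⟫) 0 then lam₀ else 0)) ≤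
      (∫ x in ball (0 : EuclideanSpace ℝ (Fin N)) R,
          ‖gradient v x‖ ^ p₀ / p₀ + (if 0 < v x then lam₀ else 0))) :
    lam₁ = ((p₀ / (p₀ - 1)) * lam₀) ^ (1 / p₀) := by
  have hminimizer : IsLipschitzLocalMinimizer volume p₀ lam₀ (ball 0 R)
      fun x : EuclideanSpace ℝ (Fin N) => lam₁ * max (-⟪x, ν₀⟫) 0 := fun v ⟨C, hC⟩ hv =>
    hmin v (fun _ _ => ⟨C, univ, univ_mem, hC.lipschitzOnWith⟩) hv
  exact stmt_13_general hminimizer isOpen_ball isBounded_ball (mem_ball_self hR)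
    (inner_zero_left ν₀) hν₀ (zero_lt_one.trans hp₀) hp₀.ne' hlam₁
end

section
/- Let Ω ⊂ ℝ^N be open, p : Ω → ℝ measurable with 1 < p(x) ≤ p_max < ∞, and let u : Ω → [0, ∞) be Lipschitz with constant C_Lip and p(x)-subharmonic in the weak sense, i.e. −∫_Ω |∇u|^{p(x)−2}∇u · ∇φ dx ≥ 0 for every nonnegative φ ∈ C_c^∞(Ω). Then there exists a constant C, depending only on N, C_Lip and p_max, such that for every ball B_{2r}(x₀) ⊂ Ω and every φ ∈ C_c^∞(B_r(x₀)) with 0 ≤ φ ≤ 1, one has −∫ |∇u|^{p(x)−2}∇u · ∇φ dx ≤ C r^{N−1}. (Equivalently, the nonnegative Radon measure Λ = Δ_{p(x)}u satisfies Λ(B_r(x₀)) ≤ C r^{N−1}.) -/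
open scoped RealInnerProductSpace
open MeasureTheory Metric

/-!
A bounded vector field `F` with nonnegative divergence on `Ω` satisfies
`(div F)(B_r) ≤ C ‖F‖_∞ r^{N-1}`: its divergence is monotone on test functions, so that a test
function `φ ≤ 1` supported in `B_r(x₀)` may be replaced by a cutoff `ψ ≥ φ` supported in
`B_{2r}(x₀)`, and `(div F)(ψ) = -∫ F · ∇ψ ≤ ‖F‖_∞ ∫ |∇ψ|`. Taking all cutoffs to be rescalings of
one fixed bump function makes `∫ |∇ψ|` exactly `r^{N-1}` times a constant.

The theorem is the case `F = |∇u|^{p-2} ∇u`, for which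
`|F| = |∇u|^{p-1} ≤ max(1, C_Lip)^{p_max - 1}`.
-/

open scoped Distributions
open Module TopologicalSpace

section Cutoff

variable {E : Type*} [NormedAddCommGroup E] [NormedSpace ℝ E]

lemma fderiv_comp_smul_sub {F : Type*} [NormedAddCommGroup F] [NormedSpace ℝ F]
    (f : E → F) (a : ℝ) (c x : E) :
    fderiv ℝ (fun y => f (a • (y - c))) x = a • fderiv ℝ f (a • (x - c)) := by
  rw [fderiv_comp_sub (f := fun y => f (a • y)) c, fderiv_comp_smul]

/-- The smooth cutoff of the ball `B_r(c)`: it equals `1` on `closedBall c r` and its support is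
`closedBall c (3 / 2 * r)`, hence a compact subset of the open ball `B_{2r}(c)`. -/
noncomputable def ballCutoff (c : E) {r : ℝ} (hr : 0 < r) : ContDiffBump c where
  rIn := r
  rOut := 3 / 2 * r
  rIn_pos := hr
  rIn_lt_rOut := by linarith

variable [FiniteDimensional ℝ E]

lemma ballCutoff_apply_eq_unit (c : E) {r : ℝ} (hr : 0 < r) (x : E) :
    ballCutoff c hr x = ballCutoff (0 : E) one_pos (r⁻¹ • (x - c)) := by
  simp [ContDiffBump.apply, ballCutoff, hr.ne']

variable [MeasurableSpace E] (μ : Measure E)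

/-- The `L¹` norm of the derivative of the cutoff of the unit ball: the factor by which the
estimates depend on the space `E` and the measure `μ`. -/
noncomputable def unitCutoffVariation : ℝ :=
  ∫ x, ‖fderiv ℝ (ballCutoff (0 : E) one_pos) x‖ ∂μ

lemma unitCutoffVariation_nonneg : 0 ≤ unitCutoffVariation μ :=
  integral_nonneg fun _ => norm_nonneg _

variable [BorelSpace E] [μ.IsAddHaarMeasure]

lemma integral_norm_fderiv_comp_inv_smul_sub {F : Type*} [NormedAddCommGroup F] [NormedSpace ℝ F]
    (f : E → F) (c : E) {r : ℝ} (hr : 0 < r) :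
    ∫ x, ‖fderiv ℝ (fun y => f (r⁻¹ • (y - c))) x‖ ∂μ =
      r ^ ((finrank ℝ E : ℝ) - 1) * ∫ x, ‖fderiv ℝ f x‖ ∂μ := by
  simp only [fderiv_comp_smul_sub, norm_smul, integral_const_mul]
  rw [integral_sub_right_eq_self (fun x => ‖fderiv ℝ f (r⁻¹ • x)‖) c,
    Measure.integral_comp_inv_smul_of_nonneg μ (fun x => ‖fderiv ℝ f x‖) hr.le,
    Real.norm_of_nonneg (inv_nonneg.2 hr.le), Real.rpow_sub_one hr.ne', Real.rpow_natCast,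
    smul_eq_mul]
  ring

lemma integral_norm_fderiv_ballCutoff (c : E) {r : ℝ} (hr : 0 < r) :
    ∫ x, ‖fderiv ℝ (ballCutoff c hr) x‖ ∂μ =
      r ^ ((finrank ℝ E : ℝ) - 1) * unitCutoffVariation μ := by
  rw [funext (ballCutoff_apply_eq_unit c hr)]
  exact integral_norm_fderiv_comp_inv_smul_sub μ _ c hr

lemma exists_testFunction_eq_one_on_closedBall {Ω : Opens E} {c : E} {r : ℝ} (hr : 0 < r)
    (hΩ : ball c (2 * r) ⊆ Ω) :
    ∃ ψ : 𝓓(Ω, ℝ), (∀ x, 0 ≤ ψ x) ∧ (∀ x ∈ closedBall c r, ψ x = 1) ∧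
      ∫ x, ‖fderiv ℝ ψ x‖ ∂μ = r ^ ((finrank ℝ E : ℝ) - 1) * unitCutoffVariation μ := by
  have hsupp : tsupport (ballCutoff c hr) ⊆ Ω := by
    rw [ContDiffBump.tsupport_eq]
    exact (closedBall_subset_ball (by simp only [ballCutoff]; linarith)).trans hΩ
  exact ⟨⟨ballCutoff c hr, (ballCutoff c hr).contDiff, (ballCutoff c hr).hasCompactSupport, hsupp⟩,
    (ballCutoff c hr).nonneg', fun _ => (ballCutoff c hr).one_of_mem_closedBall,
    integral_norm_fderiv_ballCutoff μ c hr⟩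

end Cutoff

section WeakDivergence

variable {E : Type*} [NormedAddCommGroup E] [NormedSpace ℝ E] [MeasurableSpace E]
  {Ω : Opens E} {F : E → E} {μ : Measure E} {M : ℝ}

/-- The distributional divergence of the vector field `F` on `Ω`, as a functional on test
functions. The integrand `F · ∇φ` is written as the derivative of `φ` along `F`, which needs no
inner product. -/
noncomputable def weakDivergence (F : E → E) (μ : Measure E) (φ : 𝓓(Ω, ℝ)) : ℝ :=
  -∫ x in Ω, fderiv ℝ φ x (F x) ∂μ

/-- The vector field `F` has nonnegative distributional divergence on `Ω`. -/
def HasNonnegWeakDivergence (F : E → E) (Ω : Opens E) (μ : Measure E) : Prop :=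
  ∀ φ : 𝓓(Ω, ℝ), (∀ x, 0 ≤ φ x) → 0 ≤ weakDivergence F μ φ

lemma ae_norm_fderiv_apply_le (hM : ∀ᵐ x ∂μ.restrict Ω, ‖F x‖ ≤ M) (φ : 𝓓(Ω, ℝ)) :
    ∀ᵐ x ∂μ.restrict Ω, ‖fderiv ℝ φ x (F x)‖ ≤ M * ‖fderiv ℝ φ x‖ := by
  filter_upwards [hM] with x hx
  rw [mul_comm]
  exact (fderiv ℝ φ x).le_opNorm_of_le hx

variable [BorelSpace E] [IsFiniteMeasureOnCompacts μ]

lemma integrable_fderiv_testFunction (φ : 𝓓(Ω, ℝ)) : Integrable (fderiv ℝ φ) μ :=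
  (φ.contDiff.continuous_fderiv (by simp)).integrable_of_hasCompactSupport
    (φ.hasCompactSupport.fderiv ℝ)

lemma integrableOn_fderiv_apply (hF : AEStronglyMeasurable F (μ.restrict Ω))
    (hM : ∀ᵐ x ∂μ.restrict Ω, ‖F x‖ ≤ M) (φ : 𝓓(Ω, ℝ)) :
    IntegrableOn (fun x => fderiv ℝ φ x (F x)) Ω μ := by
  have hφ : Integrable (fderiv ℝ φ) (μ.restrict Ω) :=
    (integrable_fderiv_testFunction φ).integrableOn
  exact (hφ.norm.const_mul M).mono'
    ((ContinuousLinearMap.id ℝ (E →L[ℝ] ℝ)).aestronglyMeasurable_comp₂ hφ.1 hF)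
    (ae_norm_fderiv_apply_le hM φ)

lemma weakDivergence_sub (hF : AEStronglyMeasurable F (μ.restrict Ω))
    (hM : ∀ᵐ x ∂μ.restrict Ω, ‖F x‖ ≤ M) (φ ψ : 𝓓(Ω, ℝ)) :
    weakDivergence F μ (φ - ψ) = weakDivergence F μ φ - weakDivergence F μ ψ := by
  have hfderiv (x : E) : fderiv ℝ (φ - ψ : 𝓓(Ω, ℝ)) x = fderiv ℝ φ x - fderiv ℝ ψ x :=
    fderiv_sub (φ.contDiff.differentiable (by simp) x) (ψ.contDiff.differentiable (by simp) x)
  simp only [weakDivergence, hfderiv, sub_apply]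
  rw [integral_sub (integrableOn_fderiv_apply hF hM φ) (integrableOn_fderiv_apply hF hM ψ)]
  ring

lemma HasNonnegWeakDivergence.mono (hdiv : HasNonnegWeakDivergence F Ω μ)
    (hF : AEStronglyMeasurable F (μ.restrict Ω)) (hM : ∀ᵐ x ∂μ.restrict Ω, ‖F x‖ ≤ M)
    {φ ψ : 𝓓(Ω, ℝ)} (h : ∀ x, φ x ≤ ψ x) : weakDivergence F μ φ ≤ weakDivergence F μ ψ := by
  rw [← sub_nonneg, ← weakDivergence_sub hF hM]
  exact hdiv (ψ - φ) fun x => sub_nonneg.2 (h x)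

lemma weakDivergence_le_mul_integral_norm_fderiv (hM : ∀ᵐ x ∂μ.restrict Ω, ‖F x‖ ≤ M)
    (φ : 𝓓(Ω, ℝ)) :
    weakDivergence F μ φ ≤ M * ∫ x, ‖fderiv ℝ φ x‖ ∂μ := by
  have hφ : Integrable (fun x => ‖fderiv ℝ φ x‖) μ := (integrable_fderiv_testFunction φ).norm
  calc weakDivergence F μ φ ≤ ‖∫ x in Ω, fderiv ℝ φ x (F x) ∂μ‖ := neg_le_abs _
    _ ≤ ∫ x in Ω, M * ‖fderiv ℝ φ x‖ ∂μ :=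
        norm_integral_le_of_norm_le (hφ.const_mul M).integrableOn (ae_norm_fderiv_apply_le hM φ)
    _ = M * ∫ x in Ω, ‖fderiv ℝ φ x‖ ∂μ := integral_const_mul _ _
    _ = M * ∫ x, ‖fderiv ℝ φ x‖ ∂μ := by
        rw [setIntegral_eq_integral_of_forall_compl_eq_zero fun x hx => ?_]
        rw [fderiv_of_notMem_tsupport ℝ fun h => hx (φ.tsupport_subset h), norm_zero]

end WeakDivergence

theorem HasNonnegWeakDivergence.le_rpow_of_le_indicator_closedBall
    {E : Type*} [NormedAddCommGroup E] [NormedSpace ℝ E] [FiniteDimensional ℝ E]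
    [MeasurableSpace E] [BorelSpace E] {μ : Measure E} [μ.IsAddHaarMeasure] {Ω : Opens E}
    {F : E → E} {M : ℝ} (hdiv : HasNonnegWeakDivergence F Ω μ)
    (hF : AEStronglyMeasurable F (μ.restrict Ω)) (hM : ∀ᵐ x ∂μ.restrict Ω, ‖F x‖ ≤ M)
    {c : E} {r : ℝ} (hr : 0 < r) (hΩ : ball c (2 * r) ⊆ Ω)
    {φ : 𝓓(Ω, ℝ)} (hφ : ∀ x, φ x ≤ (closedBall c r).indicator 1 x) :
    weakDivergence F μ φ ≤ M * unitCutoffVariation μ * r ^ ((finrank ℝ E : ℝ) - 1) := by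
  obtain ⟨ψ, hψ_nonneg, hψ_one, hψ_variation⟩ := exists_testFunction_eq_one_on_closedBall μ hr hΩ
  have hφψ (x : E) : φ x ≤ ψ x :=
    (hφ x).trans <| Set.indicator_le' (fun x hx => (hψ_one x hx).ge) (fun x _ => hψ_nonneg x) x
  calc weakDivergence F μ φ ≤ weakDivergence F μ ψ := hdiv.mono hF hM hφψ
    _ ≤ M * ∫ x, ‖fderiv ℝ ψ x‖ ∂μ := weakDivergence_le_mul_integral_norm_fderiv hM ψ
    _ = M * unitCutoffVariation μ * r ^ ((finrank ℝ E : ℝ) - 1) := by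
        rw [hψ_variation]
        ring

section PFlux

section NormedSpace

variable {E : Type*} [NormedAddCommGroup E] [NormedSpace ℝ E]

lemma norm_norm_rpow_smul (v : E) {p : ℝ} (hp : p ≠ 1) :
    ‖‖v‖ ^ (p - 2) • v‖ = ‖v‖ ^ (p - 1) := by
  rcases eq_or_ne v 0 with rfl | hv
  · simp [Real.zero_rpow (sub_ne_zero.2 hp)]
  · rw [norm_smul, Real.norm_of_nonneg (by positivity), ← Real.rpow_add_one (norm_ne_zero_iff.2 hv)]
    ring_nf

lemma norm_norm_rpow_smul_le {v : E} {L p q : ℝ} (hv : ‖v‖ ≤ L) (hp : 1 < p) (hpq : p ≤ q) :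
    ‖‖v‖ ^ (p - 2) • v‖ ≤ max 1 L ^ (q - 1) :=
  calc ‖‖v‖ ^ (p - 2) • v‖ = ‖v‖ ^ (p - 1) := norm_norm_rpow_smul v hp.ne'
    _ ≤ max 1 L ^ (p - 1) := by
        gcongr
        exact hv.trans (le_max_right _ _)
    _ ≤ max 1 L ^ (q - 1) := by
        gcongr
        exact le_max_left _ _

end NormedSpace

variable {E : Type*} [NormedAddCommGroup E] [InnerProductSpace ℝ E] [CompleteSpace E]
  {p u : E → ℝ}

lemma norm_gradient (f : E → ℝ) (x : E) : ‖gradient f x‖ = ‖fderiv ℝ f x‖ :=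
  LinearIsometryEquiv.norm_map _ _

lemma measurable_gradient [MeasurableSpace E] [BorelSpace E] (f : E → ℝ) :
    Measurable (gradient f) :=
  (InnerProductSpace.toDual ℝ E).symm.continuous.measurable.comp (measurable_fderiv ℝ f)

/-- The flux `|∇u|^{p(x)-2} ∇u` of the `p(x)`-Laplacian. At critical points it is `0`, also where
`p x < 2` and the factor `‖gradient u x‖ ^ (p x - 2)` is a junk value. -/
noncomputable def pFlux (p u : E → ℝ) (x : E) : E :=
  ‖gradient u x‖ ^ (p x - 2) • gradient u x

lemma norm_pFlux_le {Ω : Set E} (hΩ : IsOpen Ω) {L : NNReal} (hu : LipschitzOnWith L u Ω) {q : ℝ}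
    (hp : ∀ x ∈ Ω, 1 < p x ∧ p x ≤ q) {x : E} (hx : x ∈ Ω) :
    ‖pFlux p u x‖ ≤ max 1 (L : ℝ) ^ (q - 1) := by
  have hgrad : ‖gradient u x‖ ≤ L := by
    rw [norm_gradient]
    exact norm_fderiv_le_of_lipschitzOn ℝ (hΩ.mem_nhds hx) hu
  exact norm_norm_rpow_smul_le hgrad (hp x hx).1 (hp x hx).2

variable [MeasurableSpace E]

lemma weakDivergence_pFlux {Ω : Opens E} (μ : Measure E) (φ : 𝓓(Ω, ℝ)) :
    weakDivergence (pFlux p u) μ φ =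
      -∫ x in Ω, ‖gradient u x‖ ^ (p x - 2) * ⟪gradient u x, gradient φ x⟫ ∂μ := by
  simp only [weakDivergence, pFlux, map_smul, smul_eq_mul, inner_gradient_right, conj_trivial]

lemma aemeasurable_pFlux [BorelSpace E] [SecondCountableTopology E] {μ : Measure E}
    (hp : AEMeasurable p μ) : AEMeasurable (pFlux p u) μ :=
  have hgrad := (measurable_gradient u).aemeasurable
  (hgrad.norm.pow (hp.sub_const 2)).smul hgrad

end PFlux

theorem stmt_16_general {E : Type*} [NormedAddCommGroup E] [InnerProductSpace ℝ E]
    [FiniteDimensional ℝ E] [MeasurableSpace E] [BorelSpace E] (μ : Measure E)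
    [μ.IsAddHaarMeasure] (L : NNReal) (q : ℝ) :
    ∃ C > (0 : ℝ), ∀ Ω : Set E, IsOpen Ω →
      ∀ p u : E → ℝ, AEMeasurable p (μ.restrict Ω) →
      (∀ x ∈ Ω, 1 < p x ∧ p x ≤ q) → LipschitzOnWith L u Ω →
      (∀ φ : E → ℝ, ContDiff ℝ (⊤ : ℕ∞) φ → HasCompactSupport φ → tsupport φ ⊆ Ω →
        (∀ x, 0 ≤ φ x) →
        0 ≤ -∫ x in Ω, ‖gradient u x‖ ^ (p x - 2) * ⟪gradient u x, gradient φ x⟫ ∂μ) →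
      ∀ (x₀ : E) (r : ℝ), 0 < r → ball x₀ (2 * r) ⊆ Ω →
      ∀ φ : E → ℝ, ContDiff ℝ (⊤ : ℕ∞) φ → HasCompactSupport φ → tsupport φ ⊆ closedBall x₀ r →
        (∀ x, φ x ≤ 1) →
        -∫ x in Ω, ‖gradient u x‖ ^ (p x - 2) * ⟪gradient u x, gradient φ x⟫ ∂μ ≤
          C * r ^ ((finrank ℝ E : ℝ) - 1) := by
  have hV := unitCutoffVariation_nonneg μ
  -- Without the summand `1` the constant would vanish in dimension `0`.
  refine ⟨max 1 (L : ℝ) ^ (q - 1) * unitCutoffVariation μ + 1, by positivity, ?_⟩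
  intro Ω hΩ p u hp hpq hu hsub x₀ r hr hball φ hφ hφc hφs hφ1
  let Ω' : Opens E := ⟨Ω, hΩ⟩
  have hφΩ : tsupport φ ⊆ Ω' := hφs.trans <| (closedBall_subset_ball (by linarith)).trans hball
  let φ' : 𝓓(Ω', ℝ) := ⟨φ, hφ, hφc, hφΩ⟩
  have hflux : ∀ᵐ x ∂μ.restrict Ω', ‖pFlux p u x‖ ≤ max 1 (L : ℝ) ^ (q - 1) :=
    ae_restrict_of_forall_mem hΩ.measurableSet fun _ => norm_pFlux_le hΩ hu hpq
  have hdiv : HasNonnegWeakDivergence (pFlux p u) Ω' μ := fun ψ hψ => by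
    rw [weakDivergence_pFlux]
    exact hsub ψ ψ.contDiff ψ.hasCompactSupport ψ.tsupport_subset hψ
  have hφ_le (x : E) : φ' x ≤ (closedBall x₀ r).indicator 1 x :=
    Set.le_indicator (fun x _ => hφ1 x)
      (fun x hx => (image_eq_zero_of_notMem_tsupport fun h => hx (hφs h)).le) x
  have hbound := hdiv.le_rpow_of_le_indicator_closedBall
    (aemeasurable_pFlux hp).aestronglyMeasurable hflux hr hball hφ_le
  rw [weakDivergence_pFlux] at hbound
  refine hbound.trans ?_
  gcongr
  exact le_add_of_nonneg_right zero_le_one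

/-- Let `Ω ⊂ ℝ^N` be open, `p` measurable with `1 < p(x) ≤ p_max < ∞`,
and `u : Ω → [0,∞)` Lipschitz with constant `C_Lip` and `p(x)`-subharmonic in the weak
sense. Then there is `C > 0`, depending only on `N`, `C_Lip` and `p_max`, such that for
every ball `B_{2r}(x₀) ⊂ Ω` and every `φ ∈ C_c^∞(B_r(x₀))` with `0 ≤ φ ≤ 1`,
`−∫ |∇u|^{p(x)−2}∇u·∇φ ≤ C r^{N−1}`. -/
theorem stmt_16 (N : ℕ) (CLip : NNReal) (pmax : ℝ) (hpmax : 1 < pmax) :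
    ∃ C > (0 : ℝ), ∀ (Ω : Set (EuclideanSpace ℝ (Fin N))), IsOpen Ω →
      ∀ p u : EuclideanSpace ℝ (Fin N) → ℝ, Measurable p →
      (∀ x ∈ Ω, 1 < p x ∧ p x ≤ pmax) →
      (∀ x ∈ Ω, 0 ≤ u x) → LipschitzOnWith CLip u Ω →
      (∀ φ : EuclideanSpace ℝ (Fin N) → ℝ, ContDiff ℝ (⊤ : ℕ∞) φ →
        HasCompactSupport φ → tsupport φ ⊆ Ω → (∀ x, 0 ≤ φ x) →
        0 ≤ -∫ x in Ω, ‖gradient u x‖ ^ (p x - 2) * ⟪gradient u x, gradient φ x⟫) →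
      ∀ (x₀ : EuclideanSpace ℝ (Fin N)) (r : ℝ), 0 < r → closedBall x₀ (2 * r) ⊆ Ω →
      ∀ φ : EuclideanSpace ℝ (Fin N) → ℝ, ContDiff ℝ (⊤ : ℕ∞) φ →
        HasCompactSupport φ → tsupport φ ⊆ ball x₀ r → (∀ x, 0 ≤ φ x ∧ φ x ≤ 1) →
        -∫ x in Ω, ‖gradient u x‖ ^ (p x - 2) * ⟪gradient u x, gradient φ x⟫ ≤
          C * r ^ ((N : ℝ) - 1) := by
  obtain ⟨C, hC, h⟩ := stmt_16_general (volume : Measure (EuclideanSpace ℝ (Fin N))) CLip pmax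
  simp only [finrank_euclideanSpace_fin] at h
  exact ⟨C, hC, fun Ω hΩ p u hp hpb _ hu hsub x₀ r hr hball φ hφ hφc hφs hφb =>
    h Ω hΩ p u hp.aemeasurable hpb hu hsub x₀ r hr (ball_subset_closedBall.trans hball) φ hφ hφc
      (hφs.trans ball_subset_closedBall) fun x => (hφb x).2⟩
end
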